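/- The subspace of GL_4(F_2)-invariants of Q_9 is one-dimensional, spanned by the class of the polynomial q = x_1x_2x_3x_4^6 + x_1x_2x_3^6x_4 + x_1x_2^6x_3x_4 + x_1^3x_2x_3x_4^4 + x_1^3x_2x_3^4x_4 + x_1^3x_2^4x_3x_4. -/

import Mathlib

/-!
Common setup: the polynomial algebra `P_4 = F_2[x_1,x_2,x_3,x_4]` (variables `X 0, ..., X 3`),
the Steenrod action, hit polynomials, the cohit spaces `Q_n`, and the (induced) actions of
`GL_4(F_2)` and of the symmetric group `Σ_4` on `Q_n`.
-/

open MvPolynomial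

noncomputable section

abbrev kk : Type := ZMod 2
abbrev P4 : Type := MvPolynomial (Fin 4) kk

/-- The total Steenrod square: the algebra endomorphism of `P4` with `X i ↦ X i + (X i)^2`.
For `g` homogeneous of degree `d`, `Sq^t g` is the degree-`d+t` homogeneous component
of `sqTotal g`. -/
def sqTotal : P4 →ₐ[kk] P4 := aeval fun i => X i + X i ^ 2

/-- The homogeneous polynomials of degree `n`, i.e. `(P_4)_n`, as a submodule. -/
def homog (n : ℕ) : Submodule kk P4 := homogeneousSubmodule (Fin 4) kk n

/-- The subspace `H_n` of hit polynomials of degree `n`: it is spanned by the elements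
`Sq^{n-d}(g) = (sqTotal g)_n` for `g` homogeneous of degree `d < n`, i.e. by all
`∑_{t>0} Sq^t(f_t)` with `f_t ∈ (P_4)_{n-t}`. -/
def hitSub (n : ℕ) : Submodule kk P4 :=
  Submodule.span kk
    {p | ∃ d, d < n ∧ ∃ g ∈ homog d, p = homogeneousComponent n (sqTotal g)}

/-- The cohit space `Q_n = (P_4)_n / H_n`. -/
abbrev Qn (n : ℕ) :=
  ↥(homog n) ⧸ ((hitSub n).comap (homog n).subtype)

/-- Projection of a polynomial onto its degree-`n` part, landing in `homog n`. -/
def toHomog (n : ℕ) : P4 →ₗ[kk] homog n :=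
  (homogeneousComponent n).codRestrict (homog n) fun f => homogeneousComponent_mem n f

/-- The class in `Q_n` of (the degree-`n` component of) a polynomial.  For `f`
homogeneous of degree `n` this is the class `[f]` of `f`. -/
def Qmk (n : ℕ) : P4 →ₗ[kk] Qn n :=
  ((hitSub n).comap (homog n).subtype).mkQ.comp (toHomog n)

/-- Substitution action of a matrix `M`: the algebra endomorphism `X i ↦ ∑ j M i j • X j`. -/
def substM (M : Matrix (Fin 4) (Fin 4) kk) : P4 →ₐ[kk] P4 :=
  aeval fun i => ∑ j, M i j • X j

/-- The set of invertible `4 × 4` matrices over `F_2`, i.e. `GL_4(F_2)`. -/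
def glSet : Set (Matrix (Fin 4) (Fin 4) kk) := {M | IsUnit M}

/-- The set of permutation matrices, i.e. `Σ_4 ⊆ GL_4(F_2)`. -/
def permSet : Set (Matrix (Fin 4) (Fin 4) kk) :=
  {M | ∃ σ : Equiv.Perm (Fin 4), M = σ.toPEquiv.toMatrix}

/-- Homogeneous polynomials of degree `n` whose class in `Q_n` is invariant under every
element of `G` (the action on classes being induced by `substM`): for every `M ∈ G`,
`M·f - f` is hit. -/
def invPre (n : ℕ) (G : Set (Matrix (Fin 4) (Fin 4) kk)) : Submodule kk P4 :=
  homog n ⊓ ⨅ M ∈ G, (hitSub n).comap ((substM M).toLinearMap - LinearMap.id)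

/-- The subspace `(Q_n)^G` of `G`-invariant classes in `Q_n`. -/
def QInv (n : ℕ) (G : Set (Matrix (Fin 4) (Fin 4) kk)) : Submodule kk (Qn n) :=
  (invPre n G).map (Qmk n)

/-- The `Σ_4`-submodule of `Q_n` generated by the classes of the polynomials in `S`:
the span of the classes of all the permuted polynomials `σ · f`, `σ ∈ Σ_4`, `f ∈ S`. -/
def permSpan (n : ℕ) (S : Set P4) : Submodule kk (Qn n) :=
  Submodule.span kk
    {c | ∃ σ : Equiv.Perm (Fin 4), ∃ f ∈ S, c = Qmk n (rename (⇑σ) f)}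

/-- The invariant polynomial `q = x₁x₂x₃x₄⁶ + x₁x₂x₃⁶x₄ + x₁x₂⁶x₃x₄ + x₁³x₂x₃x₄⁴ +
x₁³x₂x₃⁴x₄ + x₁³x₂⁴x₃x₄` (with `x_i = X (i-1)`). -/
def q7 : P4 :=
  X 0 * X 1 * X 2 * X 3 ^ 6 + X 0 * X 1 * X 2 ^ 6 * X 3 + X 0 * X 1 ^ 6 * X 2 * X 3 +
    X 0 ^ 3 * X 1 * X 2 * X 3 ^ 4 + X 0 ^ 3 * X 1 * X 2 ^ 4 * X 3 +
    X 0 ^ 3 * X 1 ^ 4 * X 2 * X 3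

/-! ### A computable model -/

/-- Exponent vectors. -/
structure Mo where
  a : ℕ
  b : ℕ
  c : ℕ
  d : ℕ

namespace Mo

def deg (m : Mo) : ℕ := m.a + m.b + m.c + m.d

def mon (m : Mo) : P4 := X 0 ^ m.a * X 1 ^ m.b * X 2 ^ m.c * X 3 ^ m.d

def ofS (s : Fin 4 →₀ ℕ) : Mo := ⟨s 0, s 1, s 2, s 3⟩

def mul (m n : Mo) : Mo := ⟨m.a + n.a, m.b + n.b, m.c + n.c, m.d + n.d⟩

def dbl (m : Mo) : Mo := ⟨2 * m.a, 2 * m.b, 2 * m.c, 2 * m.d⟩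

def idx (m : Mo) : ℕ := m.a + 10 * m.b + 100 * m.c

end Mo

def ev : List Mo → P4
  | [] => 0
  | m :: l => m.mon + ev l

def lmul1 (m : Mo) : List Mo → List Mo
  | [] => []
  | n :: l => m.mul n :: lmul1 m l

def lmul : List Mo → List Mo → List Mo
  | [], _ => []
  | m :: l, l' => lmul1 m l' ++ lmul l l'

def ldbl : List Mo → List Mo
  | [] => []
  | n :: l => n.dbl :: ldbl l

/-- `n`-th power for `n < 2 ^ fuel`. -/
def lpow (L : List Mo) : ℕ → ℕ → List Mo
  | 0, _ => [⟨0, 0, 0, 0⟩]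
  | k + 1, n => bif Nat.beq (n % 2) 0 then ldbl (lpow L k (n / 2))
      else lmul L (ldbl (lpow L k (n / 2)))

def subst (L0 L1 L2 L3 : List Mo) (m : Mo) : List Mo :=
  lmul (lmul (lmul (lpow L0 4 m.a) (lpow L1 4 m.b)) (lpow L2 4 m.c)) (lpow L3 4 m.d)

theorem mon_mul (m n : Mo) : (m.mul n).mon = m.mon * n.mon := by
  simp only [Mo.mon, Mo.mul]; ring

theorem mon_dbl (m : Mo) : m.dbl.mon = m.mon ^ 2 := by
  simp only [Mo.mon, Mo.dbl]; ring

theorem mon_one : Mo.mon ⟨0, 0, 0, 0⟩ = 1 := by simp [Mo.mon]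

theorem ev_append (l l' : List Mo) : ev (l ++ l') = ev l + ev l' := by
  induction l with
  | nil => simp [ev]
  | cons m l ih => simp [ev, ih, add_assoc]

theorem ev_lmul1 (m : Mo) (l : List Mo) : ev (lmul1 m l) = m.mon * ev l := by
  induction l with
  | nil => simp [ev, lmul1]
  | cons n l ih => simp [ev, lmul1, ih, mon_mul, mul_add]

theorem ev_lmul (l l' : List Mo) : ev (lmul l l') = ev l * ev l' := by
  induction l with
  | nil => simp [ev, lmul]
  | cons n l ih => simp [ev, lmul, ih, ev_append, ev_lmul1, add_mul]

theorem ev_ldbl (l : List Mo) : ev (ldbl l) = ev l ^ 2 := by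
  induction l with
  | nil => simp [ev, ldbl]
  | cons n l ih => simp [ev, ldbl, ih, mon_dbl, CharTwo.add_sq]

theorem ev_lpow (L : List Mo) (k n : ℕ) (h : n < 2 ^ k) : ev (lpow L k n) = ev L ^ n := by
  induction k generalizing n with
  | zero =>
    have : n = 0 := by simpa using h
    subst this
    simp [lpow, ev, mon_one]
  | succ k ih =>
    have h2 : n / 2 < 2 ^ k := by rw [pow_succ] at h; omega
    rcases Nat.mod_two_eq_zero_or_one n with h0 | h0
    · simp only [lpow, h0, Nat.beq, cond_true, ev_ldbl, ih _ h2, ← pow_mul]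
      congr 1; omega
    · simp only [lpow, h0, Nat.beq, cond_false, ev_lmul, ev_ldbl, ih _ h2, ← pow_mul, ← pow_succ']
      congr 1; omega

theorem ev_subst (F : P4 →ₐ[kk] P4) (L0 L1 L2 L3 : List Mo) (h0 : F (X 0) = ev L0)
    (h1 : F (X 1) = ev L1) (h2 : F (X 2) = ev L2) (h3 : F (X 3) = ev L3) (m : Mo)
    (hm : m.deg < 16) : F m.mon = ev (subst L0 L1 L2 L3 m) := by
  simp only [Mo.deg] at hm
  simp only [subst, ev_lmul]
  rw [ev_lpow _ 4 _ (by omega), ev_lpow _ 4 _ (by omega), ev_lpow _ 4 _ (by omega),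
    ev_lpow _ 4 _ (by omega)]
  simp [Mo.mon, h0, h1, h2, h3]

/-- Normal forms of the monomials of degree 9, as bit vectors of length 46. -/
def nfTab : List (List (List ℕ)) :=
  [[[0, 0, 0, 0, 0, 0, 0, 0, 0, 0], [0, 1, 0, 2, 0, 2, 0, 4, 0], [0, 0, 0, 0, 0, 0, 0, 0], [0, 8,
  0, 16, 0, 32, 0], [0, 0, 0, 0, 0, 0], [0, 8, 0, 32, 0], [0, 0, 0, 0], [0, 64, 0], [0, 0], [0]],
  [[0, 128, 0, 256, 0, 256, 0, 512, 0], [1024, 2048, 4212736, 4096, 4212736, 4096, 103113494528,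
  8192], [0, 16384, 0, 12605440, 0, 68753752064, 0], [32768, 65536, 16859136, 131072,
  68720066560, 262144], [0, 16384, 0, 68753752064, 0], [32768, 65536, 68720066560, 262144], [0,
  524288, 0], [1048576, 2097152], [0]], [[0, 0, 0, 0, 0, 0, 0, 0], [0, 4194304, 0, 8388608, 0,
  34359738368, 0], [0, 0, 0, 0, 0, 0], [0, 16777216, 0, 33554432, 0], [0, 0, 0, 0], [0,
  68719476736, 0], [0, 0], [0]], [[0, 67108864, 0, 134217728, 0, 137438953472, 0], [268435456,
  536870912, 2688548864, 1073741824, 4948339195904, 274877906944], [0, 2147483648, 0,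
  4983772676096, 0], [4294967296, 8589934592, 627065225216, 17179869184], [0, 549755813888, 0],
  [1099511627776, 2199023255552], [0]], [[0, 0, 0, 0, 0, 0], [0, 4194304, 0, 34359738368, 0], [0,
  0, 0, 0], [0, 68719476736, 0], [0, 0], [0]], [[0, 67108864, 0, 137438953472, 0], [268435456,
  536870912, 4948339195904, 274877906944], [0, 549755813888, 0], [1099511627776, 2199023255552],
  [0]], [[0, 0, 0, 0], [0, 4398046511104, 0], [0, 0], [0]], [[0, 8796093022208, 0],
  [17592186044416, 35184372088832], [0]], [[0, 0], [0]], [[0]]]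

/-- The admissible monomials. -/
def bas : List Mo :=
  [⟨0, 1, 1, 7⟩, ⟨0, 1, 3, 5⟩, ⟨0, 1, 7, 1⟩, ⟨0, 3, 1, 5⟩, ⟨0, 3, 3, 3⟩, ⟨0, 5, 3, 1⟩, ⟨0, 7, 1,
  1⟩, ⟨1, 0, 1, 7⟩, ⟨1, 0, 3, 5⟩, ⟨1, 0, 7, 1⟩, ⟨1, 1, 0, 7⟩, ⟨1, 1, 1, 6⟩, ⟨1, 1, 3, 4⟩, ⟨1, 1,
  7, 0⟩, ⟨1, 2, 1, 5⟩, ⟨1, 3, 0, 5⟩, ⟨1, 3, 1, 4⟩, ⟨1, 3, 3, 2⟩, ⟨1, 5, 3, 0⟩, ⟨1, 6, 1, 1⟩, ⟨1,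
  7, 0, 1⟩, ⟨1, 7, 1, 0⟩, ⟨2, 1, 1, 5⟩, ⟨2, 1, 3, 3⟩, ⟨2, 3, 1, 3⟩, ⟨2, 3, 3, 1⟩, ⟨3, 0, 1, 5⟩,
  ⟨3, 0, 3, 3⟩, ⟨3, 1, 0, 5⟩, ⟨3, 1, 1, 4⟩, ⟨3, 1, 3, 2⟩, ⟨3, 2, 1, 3⟩, ⟨3, 3, 0, 3⟩, ⟨3, 3, 1,
  2⟩, ⟨3, 3, 3, 0⟩, ⟨4, 1, 3, 1⟩, ⟨4, 3, 1, 1⟩, ⟨5, 0, 3, 1⟩, ⟨5, 1, 3, 0⟩, ⟨5, 2, 1, 1⟩, ⟨5, 3,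
  0, 1⟩, ⟨5, 3, 1, 0⟩, ⟨6, 1, 1, 1⟩, ⟨7, 0, 1, 1⟩, ⟨7, 1, 0, 1⟩, ⟨7, 1, 1, 0⟩]

def bs (j : ℕ) : Mo := bas.getD j ⟨9, 0, 0, 0⟩

def nfM (m : Mo) : ℕ :=
  bif Nat.beq m.deg 9 then ((nfTab.getD m.a []).getD m.b []).getD m.c 0 else 0

def nfv : List Mo → ℕ
  | [] => 0
  | m :: l => Nat.xor (nfM m) (nfv l)

def bt (n j : ℕ) : kk := if n.testBit j then 1 else 0

theorem bt_xor (m n j : ℕ) : bt (Nat.xor m n) j = bt m j + bt n j := by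
  have h : (Nat.xor m n).testBit j = (m.testBit j ^^ n.testBit j) := Nat.testBit_xor ..
  unfold bt
  rw [h]
  cases m.testBit j <;> cases n.testBit j <;> decide

theorem bt_zero (j : ℕ) : bt 0 j = 0 := by simp [bt]

theorem bt_pow (i j : ℕ) : bt (2 ^ i) j = if i = j then 1 else 0 := by
  simp [bt, Nat.testBit_two_pow]

theorem beq_false_of {m n : ℕ} (h : m ≠ n) : Nat.beq m n = false := by
  cases hb : Nat.beq m n
  · rfl
  · exact absurd (Nat.eq_of_beq_eq_true hb) h

theorem monomial_eq_mon (s : Fin 4 →₀ ℕ) : monomial s (1 : kk) = (Mo.ofS s).mon := by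
  rw [monomial_eq, Finsupp.prod_fintype _ _ (by simp)]
  simp [Fin.prod_univ_four, Mo.mon, Mo.ofS]

theorem exists_ofS (m : Mo) : ∃ s, Mo.ofS s = m := by
  refine ⟨Finsupp.equivFunOnFinite.symm ![m.a, m.b, m.c, m.d], ?_⟩
  simp [Mo.ofS]

theorem deg_ofS (s : Fin 4 →₀ ℕ) : (Mo.ofS s).deg = s.degree := by
  rw [Finsupp.degree_eq_sum]
  simp [Fin.sum_univ_four, Mo.ofS, Mo.deg]

theorem homog_ind {V : Type*} [AddCommGroup V] [Module kk V] (n : ℕ) (F : P4 →ₗ[kk] V)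
    (S : Submodule kk V) (h : ∀ m : Mo, m.deg = n → F m.mon ∈ S) (g : P4) (hg : g ∈ homog n) :
    F g ∈ S := by
  rw [g.as_sum, map_sum]
  refine Submodule.sum_mem _ fun s hs => ?_
  have h1 : monomial s (coeff s g) = coeff s g • monomial s (1 : kk) := by
    rw [smul_monomial, smul_eq_mul, mul_one]
  rw [h1, map_smul, monomial_eq_mon]
  refine Submodule.smul_mem _ _ (h _ ?_)
  rw [deg_ofS]
  have hg' : g.IsHomogeneous n := hg
  have := hg' (mem_support_iff.1 hs)
  rw [Finsupp.degree_eq_weight_one]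
  exact this

theorem mon_homog (m : Mo) : m.mon ∈ homog m.deg := by
  obtain ⟨s, rfl⟩ := exists_ofS m
  rw [← monomial_eq_mon, deg_ofS]
  exact isHomogeneous_monomial _ rfl

def Ps (j : ℕ) : P4 →ₗ[kk] kk :=
  (basisMonomials (Fin 4) kk).constr kk fun s => bt (nfM (Mo.ofS s)) j

theorem Ps_mon (j : ℕ) (m : Mo) : Ps j m.mon = bt (nfM m) j := by
  obtain ⟨s, rfl⟩ := exists_ofS m
  rw [← monomial_eq_mon, Ps]
  have h := Module.Basis.constr_basis (basisMonomials (Fin 4) kk) kk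
    (fun s => bt (nfM (Mo.ofS s)) j) s
  rwa [coe_basisMonomials] at h

theorem Ps_ev (j : ℕ) (l : List Mo) : Ps j (ev l) = bt (nfv l) j := by
  induction l with
  | nil => simp [ev, nfv, bt_zero]
  | cons m l ih => rw [ev, nfv, bt_xor, map_add, ih, Ps_mon]

theorem Ps_hc (j : ℕ) (f : P4) : Ps j (homogeneousComponent 9 f) = Ps j f := by
  have : (Ps j).comp (homogeneousComponent 9) = Ps j := by
    refine (basisMonomials (Fin 4) kk).ext fun s => ?_
    simp only [coe_basisMonomials, LinearMap.comp_apply]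
    have hm : monomial s (1 : kk) ∈ homogeneousSubmodule (Fin 4) kk s.degree :=
      isHomogeneous_monomial _ rfl
    rw [homogeneousComponent_of_mem hm]
    split_ifs with h
    · rfl
    · rw [monomial_eq_mon, Ps_mon, map_zero]
      have : Nat.beq (Mo.ofS s).deg 9 = false := by
        rw [deg_ofS]
        exact beq_false_of (fun h' => h h'.symm)
      simp [nfM, this, bt_zero]
  exact LinearMap.congr_fun this f

/-! ### hit polynomials are killed -/

def sqS (m : Mo) : List Mo :=
  subst [⟨1, 0, 0, 0⟩, ⟨2, 0, 0, 0⟩] [⟨0, 1, 0, 0⟩, ⟨0, 2, 0, 0⟩] [⟨0, 0, 1, 0⟩, ⟨0, 0, 2, 0⟩]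
    [⟨0, 0, 0, 1⟩, ⟨0, 0, 0, 2⟩] m

theorem sq_mon (m : Mo) (h : m.deg < 16) : sqTotal m.mon = ev (sqS m) := by
  apply ev_subst _ _ _ _ _ _ _ _ _ _ h <;> simp [sqTotal, ev, Mo.mon]

def check1 : Bool :=
  (List.range 9).all fun a => (List.range (9 - a)).all fun b => (List.range (9 - a - b)).all fun c =>
    (List.range (9 - a - b - c)).all fun d => Nat.beq (nfv (sqS ⟨a, b, c, d⟩)) 0

theorem check1_true : check1 = true := by decide +kernel

theorem check1_spec (m : Mo) (h : m.deg < 9) : nfv (sqS m) = 0 := by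
  have := check1_true
  simp only [check1, List.all_eq_true, List.mem_range] at this
  simp only [Mo.deg] at h
  exact Nat.eq_of_beq_eq_true
    (this m.a (by omega) m.b (by omega) m.c (by omega) m.d (by omega))

theorem Ps_hit (j : ℕ) (p : P4) (hp : p ∈ hitSub 9) : Ps j p = 0 := by
  have : hitSub 9 ≤ LinearMap.ker (Ps j) := by
    refine Submodule.span_le.2 ?_
    rintro p ⟨d, hd, g, hg, rfl⟩
    change Ps j _ = 0
    rw [Ps_hc]
    have := homog_ind d ((Ps j).comp sqTotal.toLinearMap) ⊥ (fun m hm => ?_) g hg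
    · simpa using this
    · simp only [LinearMap.comp_apply, AlgHom.toLinearMap_apply, Submodule.mem_bot]
      rw [sq_mon _ (by omega), Ps_ev, check1_spec _ (by omega), bt_zero]
  exact this hp

/-! ### xor elimination -/

def forceN {α : Type} (n : ℕ) (f : ℕ → α) : α :=
  match n with
  | 0 => f 0
  | k + 1 => f (k + 1)

theorem forceN_eq {α : Type} (n : ℕ) (f : ℕ → α) : forceN n f = f n := by
  cases n <;> rfl

def redL : List ℕ → ℕ → ℕ
  | [], v => v
  | b :: B, v => forceN v fun v => forceN (Nat.xor v b) fun w =>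
      bif Nat.ble v w then redL B v else redL B w

def forceL {α : Type} : List ℕ → (List ℕ → α) → α
  | [], f => f []
  | x :: l, f => forceN x fun x => forceL l fun l => f (x :: l)

theorem forceL_eq {α : Type} (l : List ℕ) (f : List ℕ → α) : forceL l f = f l := by
  induction l generalizing f with
  | nil => rfl
  | cons x l ih => simp [forceL, forceN_eq, ih]

/-- Extend the echelon basis `B` by the vectors of a list. -/
def build : List ℕ → List ℕ → List ℕ
  | B, [] => B
  | B, v :: l => forceN (redL B v) fun w =>
      bif Nat.beq w 0 then build B l else forceL (B ++ [w]) fun B => build B l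

structure XorClosed (P : ℕ → Prop) : Prop where
  zero : P 0
  xor : ∀ m n, P m → P n → P (Nat.xor m n)

theorem xor_cancel (m n : ℕ) : Nat.xor (Nat.xor m n) n = m := by
  change (m ^^^ n) ^^^ n = m
  rw [Nat.xor_assoc, Nat.xor_self, Nat.xor_zero]

theorem redL_iff {P : ℕ → Prop} (hP : XorClosed P) (B : List ℕ) (hB : ∀ b ∈ B, P b) (v : ℕ) :
    P (redL B v) ↔ P v := by
  induction B generalizing v with
  | nil => rfl
  | cons b B ih =>
    have hb := hB b (by simp)
    have ih := ih fun b hb => hB b (by simp [hb])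
    simp only [redL, forceN_eq]
    cases Nat.ble v (Nat.xor v b)
    · rw [cond_false, ih]
      refine ⟨fun h => ?_, fun h => hP.xor _ _ h hb⟩
      have := hP.xor _ _ h hb
      rwa [xor_cancel] at this
    · rw [cond_true, ih]

theorem build_mem {P : ℕ → Prop} (hP : XorClosed P) (l B : List ℕ) (hB : ∀ b ∈ B, P b)
    (hl : ∀ b ∈ l, P b) : ∀ b ∈ build B l, P b := by
  induction l generalizing B with
  | nil => simpa [build] using hB
  | cons v l ih =>
    have hv := hl v (by simp)
    have hl' : ∀ b ∈ l, P b := fun b hb => hl b (by simp [hb])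
    simp only [build, forceN_eq, forceL_eq]
    cases Nat.beq (redL B v) 0
    · rw [cond_false]
      refine ih _ ?_ hl'
      intro b hb
      rcases List.mem_append.1 hb with hb | hb
      · exact hB b hb
      · rw [List.mem_singleton.1 hb]
        exact (redL_iff hP B hB v).2 hv
    · rw [cond_true]
      exact ih _ hB hl'

theorem of_build {P : ℕ → Prop} (hP : XorClosed P) (l : List ℕ) (hl : ∀ b ∈ l, P b) (v : ℕ)
    (hv : redL (build [] l) v = 0) : P v := by
  rw [← redL_iff hP _ (build_mem hP l [] (by simp) hl) v, hv]
  exact hP.zero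

/-! ### every polynomial is congruent to its normal form -/

def dec (i : ℕ) : Mo := ⟨i % 10, i / 10 % 10, i / 100, 9 - i % 10 - i / 10 % 10 - i / 100⟩

def E (v : ℕ) : P4 := ∑ i ∈ Finset.range 1000, bt v i • (dec i).mon

theorem E_xor (m n : ℕ) : E (Nat.xor m n) = E m + E n := by
  simp only [E, bt_xor, add_smul, Finset.sum_add_distrib]

theorem E_zero : E 0 = 0 := by simp [E, bt_zero]

theorem E_pow (m : Mo) (h : m.deg = 9) : E (2 ^ m.idx) = m.mon := by
  simp only [Mo.deg] at h
  have hi : m.idx < 1000 := by simp only [Mo.idx]; omega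
  simp only [E, bt_pow, ite_smul, one_smul, zero_smul]
  rw [Finset.sum_ite_eq, if_pos (by simpa using hi)]
  congr 1
  obtain ⟨a, b, c, d⟩ := m
  simp only at h
  simp only [Mo.idx] at hi
  simp only [Mo.idx, dec, Mo.mk.injEq]
  by_cases ha : a = 9
  · subst ha; obtain rfl : b = 0 := by omega
    obtain rfl : c = 0 := by omega
    omega
  have h1 : (a + 10 * b + 100 * c) % 10 = a := by omega
  have h2 : (a + 10 * b + 100 * c) / 10 % 10 = b := by omega
  have h3 : (a + 10 * b + 100 * c) / 100 = c := by omega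
  rw [h1, h2, h3]
  omega

/-- The degree-9 part of a list, as a bit vector. -/
def toN : List Mo → ℕ
  | [] => 0
  | m :: l => bif Nat.beq m.deg 9 then Nat.xor (2 ^ m.idx) (toN l) else toN l

theorem E_toN (l : List Mo) : E (toN l) = homogeneousComponent 9 (ev l) := by
  induction l with
  | nil => simp [toN, ev, E_zero]
  | cons m l ih =>
    have hm : m.mon ∈ homogeneousSubmodule (Fin 4) kk m.deg := mon_homog m
    simp only [toN, ev, map_add, homogeneousComponent_of_mem hm]
    by_cases h : m.deg = 9
    · have h' : Nat.beq m.deg 9 = true := by simpa using h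
      rw [h', if_pos h.symm, cond_true, E_xor, E_pow m h, ih]
    · have h' : Nat.beq m.deg 9 = false := beq_false_of h
      rw [h', if_neg fun h' => h h'.symm, cond_false, ih, zero_add]

def monos (d : ℕ) : List Mo :=
  (List.range (d + 1)).flatMap fun a => (List.range (d + 1 - a)).flatMap fun b =>
    (List.range (d + 1 - a - b)).map fun c => ⟨a, b, c, d - a - b - c⟩

theorem monos_deg (d : ℕ) (m : Mo) (h : m ∈ monos d) : m.deg = d := by
  simp only [monos, List.mem_flatMap, List.mem_map, List.mem_range] at h
  obtain ⟨a, ha, b, hb, c, hc, rfl⟩ := h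
  simp only [Mo.deg]; omega

theorem mem_monos (d : ℕ) (m : Mo) (h : m.deg = d) : m ∈ monos d := by
  simp only [monos, List.mem_flatMap, List.mem_map, List.mem_range]
  simp only [Mo.deg] at h
  obtain ⟨a, b, c, e⟩ := m
  refine ⟨a, by simp at h; omega, b, by simp at h; omega, c, by simp at h; omega, ?_⟩
  simp only at h
  simp only [Mo.mk.injEq, true_and]
  omega

/-- Each entry is a list of monomials of degree `< 9`; the sum of their squares in degree 9
involves exactly one monomial that is not yet known to be congruent to its normal form, and
the number is the index of that monomial. -/
def steps : List (ℕ × List Mo) :=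
  [⟨0, [⟨0, 0, 0, 5⟩]⟩, ⟨100, [⟨0, 0, 1, 4⟩]⟩, ⟨400, [⟨0, 0, 2, 3⟩]⟩, ⟨500, [⟨0, 0, 3, 2⟩]⟩,
  ⟨800, [⟨0, 0, 4, 1⟩]⟩, ⟨900, [⟨0, 0, 5, 0⟩]⟩, ⟨10, [⟨0, 1, 0, 4⟩]⟩, ⟨410, [⟨0, 1, 2, 2⟩]⟩,
  ⟨810, [⟨0, 1, 4, 0⟩]⟩, ⟨40, [⟨0, 2, 0, 3⟩]⟩, ⟨140, [⟨0, 2, 1, 2⟩]⟩, ⟨440, [⟨0, 2, 2, 1⟩]⟩,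
  ⟨540, [⟨0, 2, 3, 0⟩]⟩, ⟨50, [⟨0, 3, 0, 2⟩]⟩, ⟨450, [⟨0, 3, 2, 0⟩]⟩, ⟨80, [⟨0, 4, 0, 1⟩]⟩, ⟨180,
  [⟨0, 4, 1, 0⟩]⟩, ⟨90, [⟨0, 5, 0, 0⟩]⟩, ⟨1, [⟨1, 0, 0, 4⟩]⟩, ⟨401, [⟨1, 0, 2, 2⟩]⟩, ⟨801, [⟨1,
  0, 4, 0⟩]⟩, ⟨41, [⟨1, 2, 0, 2⟩]⟩, ⟨441, [⟨1, 2, 2, 0⟩]⟩, ⟨81, [⟨1, 4, 0, 0⟩]⟩, ⟨4, [⟨2, 0, 0,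
  3⟩]⟩, ⟨104, [⟨2, 0, 1, 2⟩]⟩, ⟨404, [⟨2, 0, 2, 1⟩]⟩, ⟨504, [⟨2, 0, 3, 0⟩]⟩, ⟨14, [⟨2, 1, 0,
  2⟩]⟩, ⟨414, [⟨2, 1, 2, 0⟩]⟩, ⟨44, [⟨2, 2, 0, 1⟩]⟩, ⟨144, [⟨2, 2, 1, 0⟩]⟩, ⟨54, [⟨2, 3, 0, 0⟩]⟩,
  ⟨5, [⟨3, 0, 0, 2⟩]⟩, ⟨405, [⟨3, 0, 2, 0⟩]⟩, ⟨45, [⟨3, 2, 0, 0⟩]⟩, ⟨8, [⟨4, 0, 0, 1⟩]⟩, ⟨108,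
  [⟨4, 0, 1, 0⟩]⟩, ⟨18, [⟨4, 1, 0, 0⟩]⟩, ⟨9, [⟨5, 0, 0, 0⟩]⟩, ⟨200, [⟨0, 0, 1, 7⟩]⟩, ⟨300, [⟨0,
  0, 3, 5⟩]⟩, ⟨600, [⟨0, 0, 5, 3⟩]⟩, ⟨700, [⟨0, 0, 7, 1⟩]⟩, ⟨20, [⟨0, 1, 0, 7⟩]⟩, ⟨320, [⟨0, 1,
  3, 4⟩]⟩, ⟨420, [⟨0, 1, 4, 3⟩]⟩, ⟨720, [⟨0, 1, 7, 0⟩]⟩, ⟨30, [⟨0, 3, 0, 5⟩]⟩, ⟨230, [⟨0, 3, 1,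
  4⟩]⟩, ⟨240, [⟨0, 3, 2, 3⟩]⟩, ⟨430, [⟨0, 3, 4, 1⟩]⟩, ⟨630, [⟨0, 3, 5, 0⟩]⟩, ⟨340, [⟨0, 4, 3,
  1⟩]⟩, ⟨60, [⟨0, 5, 0, 3⟩]⟩, ⟨360, [⟨0, 5, 3, 0⟩]⟩, ⟨70, [⟨0, 7, 0, 1⟩]⟩, ⟨270, [⟨0, 7, 1, 0⟩]⟩,
  ⟨2, [⟨1, 0, 0, 7⟩]⟩, ⟨302, [⟨1, 0, 3, 4⟩]⟩, ⟨402, [⟨1, 0, 4, 3⟩]⟩, ⟨702, [⟨1, 0, 7, 0⟩]⟩, ⟨211,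
  [⟨1, 1, 1, 5⟩]⟩, ⟨32, [⟨1, 3, 0, 4⟩]⟩, ⟨432, [⟨1, 3, 4, 0⟩]⟩, ⟨42, [⟨1, 4, 0, 3⟩]⟩, ⟨342, [⟨1,
  4, 3, 0⟩]⟩, ⟨72, [⟨1, 7, 0, 0⟩]⟩, ⟨3, [⟨3, 0, 0, 5⟩]⟩, ⟨203, [⟨3, 0, 1, 4⟩]⟩, ⟨204, [⟨3, 0, 2,
  3⟩]⟩, ⟨403, [⟨3, 0, 4, 1⟩]⟩, ⟨603, [⟨3, 0, 5, 0⟩]⟩, ⟨23, [⟨3, 1, 0, 4⟩]⟩, ⟨423, [⟨3, 1, 4,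
  0⟩]⟩, ⟨24, [⟨3, 2, 0, 3⟩]⟩, ⟨324, [⟨3, 2, 3, 0⟩]⟩, ⟨43, [⟨3, 4, 0, 1⟩]⟩, ⟨243, [⟨3, 4, 1, 0⟩]⟩,
  ⟨63, [⟨3, 5, 0, 0⟩]⟩, ⟨304, [⟨4, 0, 3, 1⟩]⟩, ⟨34, [⟨4, 3, 0, 1⟩]⟩, ⟨234, [⟨4, 3, 1, 0⟩]⟩, ⟨6,
  [⟨5, 0, 0, 3⟩]⟩, ⟨306, [⟨5, 0, 3, 0⟩]⟩, ⟨36, [⟨5, 3, 0, 0⟩]⟩, ⟨7, [⟨7, 0, 0, 1⟩]⟩, ⟨207, [⟨7,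
  0, 1, 0⟩]⟩, ⟨27, [⟨7, 1, 0, 0⟩]⟩, ⟨510, [⟨0, 1, 3, 3⟩]⟩, ⟨220, [⟨0, 2, 2, 3⟩]⟩, ⟨520, [⟨0, 2,
  3, 2⟩]⟩, ⟨150, [⟨0, 3, 1, 3⟩]⟩, ⟨250, [⟨0, 3, 2, 2⟩]⟩, ⟨530, [⟨0, 3, 3, 1⟩]⟩, ⟨501, [⟨1, 0, 3,
  3⟩]⟩, ⟨51, [⟨1, 3, 0, 3⟩]⟩, ⟨531, [⟨1, 3, 3, 0⟩]⟩, ⟨202, [⟨2, 0, 2, 3⟩]⟩, ⟨502, [⟨2, 0, 3,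
  2⟩]⟩, ⟨22, [⟨2, 2, 0, 3⟩]⟩, ⟨522, [⟨2, 2, 3, 0⟩]⟩, ⟨52, [⟨2, 3, 0, 2⟩]⟩, ⟨252, [⟨2, 3, 2, 0⟩]⟩,
  ⟨105, [⟨3, 0, 1, 3⟩]⟩, ⟨205, [⟨3, 0, 2, 2⟩]⟩, ⟨503, [⟨3, 0, 3, 1⟩]⟩, ⟨15, [⟨3, 1, 0, 3⟩]⟩,
  ⟨513, [⟨3, 1, 3, 0⟩]⟩, ⟨25, [⟨3, 2, 0, 2⟩]⟩, ⟨225, [⟨3, 2, 2, 0⟩]⟩, ⟨53, [⟨3, 3, 0, 1⟩]⟩, ⟨153,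
  [⟨3, 3, 1, 0⟩]⟩, ⟨210, [⟨0, 1, 2, 5⟩]⟩, ⟨610, [⟨0, 1, 5, 2⟩]⟩, ⟨620, [⟨0, 1, 6, 1⟩]⟩, ⟨120,
  [⟨0, 2, 1, 5⟩]⟩, ⟨160, [⟨0, 5, 1, 2⟩]⟩, ⟨260, [⟨0, 5, 2, 1⟩]⟩, ⟨201, [⟨1, 0, 2, 5⟩]⟩, ⟨601,
  [⟨1, 0, 5, 2⟩]⟩, ⟨602, [⟨1, 0, 6, 1⟩]⟩, ⟨21, [⟨1, 2, 0, 5⟩]⟩, ⟨621, [⟨1, 2, 5, 0⟩]⟩, ⟨61, [⟨1,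
  5, 0, 2⟩]⟩, ⟨261, [⟨1, 5, 2, 0⟩]⟩, ⟨62, [⟨1, 6, 0, 1⟩]⟩, ⟨162, [⟨1, 6, 1, 0⟩]⟩, ⟨102, [⟨2, 0,
  1, 5⟩]⟩, ⟨12, [⟨2, 1, 0, 5⟩]⟩, ⟨612, [⟨2, 1, 5, 0⟩]⟩, ⟨106, [⟨5, 0, 1, 2⟩]⟩, ⟨206, [⟨5, 0, 2,
  1⟩]⟩, ⟨16, [⟨5, 1, 0, 2⟩]⟩, ⟨216, [⟨5, 1, 2, 0⟩]⟩, ⟨26, [⟨5, 2, 0, 1⟩]⟩, ⟨126, [⟨5, 2, 1, 0⟩]⟩,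
  ⟨222, [⟨1, 1, 1, 2⟩, ⟨1, 1, 1, 3⟩]⟩, ⟨221, [⟨1, 2, 2, 3⟩]⟩, ⟨212, [⟨2, 1, 2, 3⟩]⟩, ⟨122, [⟨2,
  2, 1, 3⟩]⟩, ⟨411, [⟨1, 1, 2, 3⟩]⟩, ⟨141, [⟨1, 2, 1, 3⟩]⟩, ⟨114, [⟨2, 1, 1, 3⟩]⟩, ⟨321, [⟨1, 1,
  3, 3⟩]⟩, ⟨231, [⟨1, 3, 1, 3⟩]⟩, ⟨213, [⟨3, 1, 1, 3⟩]⟩, ⟨422, [⟨1, 1, 2, 2⟩, ⟨1, 1, 4, 1⟩]⟩,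
  ⟨421, [⟨1, 2, 4, 1⟩]⟩, ⟨412, [⟨2, 1, 4, 1⟩]⟩, ⟨322, [⟨2, 2, 3, 1⟩]⟩, ⟨511, [⟨1, 1, 3, 2⟩]⟩,
  ⟨241, [⟨1, 2, 2, 2⟩]⟩, ⟨214, [⟨2, 1, 2, 2⟩]⟩, ⟨512, [⟨2, 1, 3, 1⟩]⟩, ⟨232, [⟨1, 3, 2, 2⟩]⟩,
  ⟨142, [⟨1, 4, 1, 2⟩]⟩, ⟨242, [⟨1, 4, 2, 1⟩]⟩, ⟨223, [⟨3, 1, 2, 2⟩]⟩, ⟨124, [⟨3, 2, 1, 2⟩]⟩,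
  ⟨224, [⟨3, 2, 2, 1⟩]⟩, ⟨151, [⟨1, 3, 1, 2⟩]⟩, ⟨152, [⟨2, 3, 1, 1⟩]⟩, ⟨115, [⟨3, 1, 1, 2⟩]⟩,
  ⟨143, [⟨3, 2, 1, 1⟩]⟩, ⟨251, [⟨1, 5, 1, 1⟩]⟩, ⟨233, [⟨3, 3, 1, 1⟩]⟩, ⟨215, [⟨5, 1, 1, 1⟩]⟩,
  ⟨431, [⟨1, 3, 2, 1⟩]⟩, ⟨413, [⟨3, 1, 2, 1⟩]⟩, ⟨341, [⟨1, 3, 3, 1⟩]⟩, ⟨323, [⟨3, 1, 3, 1⟩]⟩,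
  ⟨521, [⟨1, 2, 3, 1⟩]⟩, ⟨611, [⟨1, 1, 5, 1⟩]⟩]

theorem hit_toN (l : List Mo) (h : ∀ m ∈ l, m.deg < 9) : E (toN (l.flatMap sqS)) ∈ hitSub 9 := by
  rw [E_toN]
  induction l with
  | nil => simp [ev]
  | cons m l ih =>
    have hm := h m (by simp)
    rw [List.flatMap_cons, ev_append, map_add, ← sq_mon m (by omega)]
    exact Submodule.add_mem _ (Submodule.subset_span ⟨m.deg, hm, m.mon, mon_homog m, rfl⟩)
      (ih fun m hm => h m (by simp [hm]))

def stepU (K v : ℕ) : ℕ := Nat.xor v (Nat.land v K)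

/-- Run the certificate, starting from the set `K` of known monomials. -/
def run (ls : List (ℕ × List Mo)) : ℕ → ℕ :=
  List.rec (motive := fun _ => ℕ → ℕ) (fun K => K)
    (fun l _ ih K => forceN K fun K => forceN (stepU K (toN (l.2.flatMap sqS))) fun u =>
      bif (l.2.all fun m => Nat.ble m.deg 8) && (Nat.beq u (2 ^ l.1) && Nat.ble l.1 999) then
        ih (Nat.lor K u)
      else 0) ls

theorem run_cons (l : ℕ × List Mo) (ls : List (ℕ × List Mo)) (K : ℕ) : run (l :: ls) K =
    forceN K fun K => forceN (stepU K (toN (l.2.flatMap sqS))) fun u =>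
      bif (l.2.all fun m => Nat.ble m.deg 8) && (Nat.beq u (2 ^ l.1) && Nat.ble l.1 999) then
        run ls (Nat.lor K u)
      else 0 := rfl

def knows (S : Submodule kk P4) (K : ℕ) : Prop :=
  ∀ i < 1000, K.testBit i = true → (dec i).mon ∈ S

theorem E_mem (S : Submodule kk P4) (K v : ℕ) (hK : knows S K)
    (h : ∀ i, v.testBit i = true → K.testBit i = true) : E v ∈ S := by
  refine Submodule.sum_mem _ fun i hi => ?_
  unfold bt
  split_ifs with hv
  · exact Submodule.smul_mem _ _ (hK i (Finset.mem_range.1 hi) (h i hv))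
  · rw [zero_smul]; exact Submodule.zero_mem _

theorem E_pow' (i : ℕ) (hi : i < 1000) : E (2 ^ i) = (dec i).mon := by
  simp only [E, bt_pow, ite_smul, one_smul, zero_smul]
  rw [Finset.sum_ite_eq, if_pos (by simpa using hi)]

theorem knows_zero (S : Submodule kk P4) : knows S 0 := by
  intro i _ h
  simp at h

theorem run_knows (S : Submodule kk P4) (hS : hitSub 9 ≤ S) (ls : List (ℕ × List Mo)) (K : ℕ)
    (hK : knows S K) : knows S (run ls K) := by
  induction ls generalizing K with
  | nil => exact hK
  | cons l ls ih =>
    simp only [run_cons, forceN_eq]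
    set v := toN (l.2.flatMap sqS) with hv
    set u := stepU K v with hu
    cases hc : ((l.2.all fun m => Nat.ble m.deg 8) &&
      (Nat.beq u (2 ^ l.1) && Nat.ble l.1 999))
    · exact knows_zero S
    · rw [cond_true]
      apply ih
      simp only [Bool.and_eq_true, List.all_eq_true] at hc
      obtain ⟨h1, h2, h3⟩ := hc
      have h2 := Nat.eq_of_beq_eq_true h2
      have h3 := Nat.le_of_ble_eq_true h3
      have hlt : l.1 < 1000 := by omega
      have hE : E v ∈ S :=
        hS (hit_toN l.2 fun m hm => Nat.lt_succ_of_le (Nat.le_of_ble_eq_true (h1 m hm)))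
      have hw : E (Nat.land v K) ∈ S := by
        refine E_mem S K _ hK fun i hi => ?_
        have : (Nat.land v K).testBit i = (v.testBit i && K.testBit i) := Nat.testBit_and ..
        rw [this] at hi
        simp only [Bool.and_eq_true] at hi
        exact hi.2
      have hEu : E u ∈ S := by
        rw [hu, stepU, E_xor]
        exact Submodule.add_mem _ hE hw
      rw [h2, E_pow' _ hlt] at hEu
      intro i hi hb
      have : (Nat.lor K u).testBit i = (K.testBit i || u.testBit i) := Nat.testBit_or ..
      rw [this, Bool.or_eq_true] at hb
      rcases hb with hb | hb
      · exact hK i hi hb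
      · rw [h2, Nat.testBit_two_pow] at hb
        rw [← of_decide_eq_true hb]
        exact hEu

/-- The set of admissible monomials as a bit vector. -/
def K0 : ℕ := toN bas

def check2 : Bool :=
  forceN (run steps K0) fun K => (monos 9).all fun m => Nat.testBit K m.idx

theorem check2_true : check2 = true := by decide +kernel

theorem bs_deg (k : ℕ) : (bs k).deg = 9 := by
  have h : ∀ k < 46, (bs k).deg = 9 := by decide
  by_cases hk : k < 46
  · exact h k hk
  · rw [bs, List.getD_eq_default _ _ (by simpa [bas] using hk)]
    rfl

theorem nfM_bs : ∀ k < 46, nfM (bs k) = 2 ^ k := by decide +kernel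

theorem check_K0 : ∀ i < 1000, K0.testBit i = true → ∃ k < 46, dec i = bs k := by
  have h : ((List.range 1000).all fun i => !(K0.testBit i) ||
      (List.range 46).any fun k => Nat.beq (dec i).a (bs k).a && Nat.beq (dec i).b (bs k).b &&
        Nat.beq (dec i).c (bs k).c && Nat.beq (dec i).d (bs k).d) = true := by decide +kernel
  intro i hi hK
  simp only [List.all_eq_true, List.mem_range] at h
  have h := h i hi
  rw [hK, Bool.not_true, Bool.false_or, List.any_eq_true] at h
  obtain ⟨k, hk, h⟩ := h
  simp only [Bool.and_eq_true] at h
  obtain ⟨⟨⟨h1, h2⟩, h3⟩, h4⟩ := h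
  refine ⟨k, List.mem_range.1 hk, ?_⟩
  have h1 := Nat.eq_of_beq_eq_true h1
  have h2 := Nat.eq_of_beq_eq_true h2
  have h3 := Nat.eq_of_beq_eq_true h3
  have h4 := Nat.eq_of_beq_eq_true h4
  generalize dec i = x at *
  generalize bs k = y at *
  cases x; cases y
  simp_all

/-- `f ↦ f - nf f`. -/
def Rm : P4 →ₗ[kk] P4 :=
  LinearMap.id + ∑ j ∈ Finset.range 46, (Ps j).smulRight (bs j).mon

theorem Rm_apply (f : P4) : Rm f = f + ∑ j ∈ Finset.range 46, Ps j f • (bs j).mon := by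
  simp [Rm, LinearMap.sum_apply]

theorem Rm_hit (f : P4) (hf : f ∈ hitSub 9) : Rm f ∈ hitSub 9 := by
  rw [Rm_apply, Finset.sum_eq_zero, add_zero]
  · exact hf
  · intro j _
    rw [Ps_hit j f hf, zero_smul]

theorem Rm_bs (k : ℕ) (hk : k < 46) : Rm (bs k).mon = 0 := by
  rw [Rm_apply]
  simp only [Ps_mon, nfM_bs k hk, bt_pow, ite_smul, one_smul, zero_smul]
  rw [Finset.sum_ite_eq, if_pos (by simpa using hk)]
  exact CharTwo.add_self_eq_zero _

theorem nf_mem (f : P4) (hf : f ∈ homog 9) :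
    f + ∑ j ∈ Finset.range 46, Ps j f • (bs j).mon ∈ hitSub 9 := by
  rw [← Rm_apply]
  refine homog_ind 9 Rm (hitSub 9) (fun m hm => ?_) f hf
  have h2 := check2_true
  simp only [check2, forceN_eq, List.all_eq_true] at h2
  have h3 := h2 m (mem_monos 9 m hm)
  have hi : m.idx < 1000 := by simp only [Mo.idx, Mo.deg] at *; omega
  have h4 := run_knows ((hitSub 9).comap Rm) Rm_hit steps K0 (fun i hi hb => ?_) m.idx hi h3
  · rw [← E_pow' _ hi, E_pow m hm] at h4
    exact h4
  · obtain ⟨k, hk, e⟩ := check_K0 i hi hb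
    rw [e, Submodule.mem_comap, Rm_bs k hk]
    exact Submodule.zero_mem _

theorem hit_of_Ps (f : P4) (hf : f ∈ homog 9) (h : ∀ j < 46, Ps j f = 0) : f ∈ hitSub 9 := by
  have h1 := nf_mem f hf
  rwa [Finset.sum_eq_zero, add_zero] at h1
  intro j hj
  rw [h j (Finset.mem_range.1 hj), zero_smul]

/-! ### the action of `GL_4` -/

theorem substM_homog (M : Matrix (Fin 4) (Fin 4) kk) (n : ℕ) (f : P4) (hf : f ∈ homog n) :
    substM M f ∈ homog n := by
  have hf' : f.IsHomogeneous n := hf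
  have := hf'.aeval (fun i => ∑ j, M i j • (X j : P4)) (n := 1) (fun i => ?_)
  · rw [one_mul] at this
    exact this
  · refine IsHomogeneous.sum _ _ _ fun j _ => ?_
    exact (homogeneousSubmodule (Fin 4) kk 1).smul_mem _ (isHomogeneous_X _ _)

theorem substM_hc (M : Matrix (Fin 4) (Fin 4) kk) (n : ℕ) (f : P4) :
    substM M (homogeneousComponent n f) = homogeneousComponent n (substM M f) := by
  have : (substM M).toLinearMap.comp (homogeneousComponent n) =
      (homogeneousComponent n).comp (substM M).toLinearMap := by
    refine (basisMonomials (Fin 4) kk).ext fun s => ?_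
    have hm : monomial s (1 : kk) ∈ homogeneousSubmodule (Fin 4) kk s.degree :=
      isHomogeneous_monomial _ rfl
    have hm' : substM M (monomial s (1 : kk)) ∈ homogeneousSubmodule (Fin 4) kk s.degree :=
      substM_homog M _ _ hm
    rw [coe_basisMonomials, LinearMap.comp_apply, LinearMap.comp_apply,
      homogeneousComponent_of_mem hm, AlgHom.toLinearMap_apply, AlgHom.toLinearMap_apply,
      homogeneousComponent_of_mem hm']
    split_ifs <;> simp
  exact LinearMap.congr_fun this f

theorem substM_sq (M : Matrix (Fin 4) (Fin 4) kk) (f : P4) :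
    substM M (sqTotal f) = sqTotal (substM M f) := by
  have : (substM M).comp sqTotal = sqTotal.comp (substM M) := by
    refine algHom_ext fun i => ?_
    have hk : ∀ x : kk, x ^ 2 = x := by decide
    simp [substM, sqTotal, Fin.sum_univ_four, CharTwo.add_sq, smul_pow, hk]
    ring
  exact AlgHom.congr_fun this f

theorem substM_hit (M : Matrix (Fin 4) (Fin 4) kk) (n : ℕ) (f : P4) (hf : f ∈ hitSub n) :
    substM M f ∈ hitSub n := by
  have : hitSub n ≤ (hitSub n).comap (substM M).toLinearMap := by
    refine Submodule.span_le.2 ?_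
    rintro p ⟨d, hd, g, hg, rfl⟩
    change substM M _ ∈ hitSub n
    rw [substM_hc, substM_sq]
    exact Submodule.subset_span ⟨d, hd, _, substM_homog M d g hg, rfl⟩
  exact this hf

theorem substM_mul (M N : Matrix (Fin 4) (Fin 4) kk) (f : P4) :
    substM (M * N) f = substM N (substM M f) := by
  have : substM (M * N) = (substM N).comp (substM M) := by
    refine algHom_ext fun i => ?_
    simp only [substM, aeval_X, AlgHom.comp_apply, map_sum, map_smul, Matrix.mul_apply,
      Finset.sum_smul, Finset.smul_sum, smul_smul]
    rw [Finset.sum_comm]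
  exact AlgHom.congr_fun this f

theorem substM_one (f : P4) : substM 1 f = f := by
  have : substM 1 = AlgHom.id kk P4 := by
    refine algHom_ext fun i => ?_
    simp [substM, Matrix.one_apply]
  rw [this]; rfl

/-- Unit exponent vector. -/
def un (i : Fin 4) : Mo :=
  ⟨if i = 0 then 1 else 0, if i = 1 then 1 else 0, if i = 2 then 1 else 0, if i = 3 then 1 else 0⟩

theorem un_mon (i : Fin 4) : (un i).mon = X i := by
  fin_cases i <;> simp [un, Mo.mon]

def tv (i j k : Fin 4) : List Mo := if k = i then [un k, un j] else [un k]

def tvS (i j : Fin 4) (m : Mo) : List Mo :=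
  subst (tv i j 0) (tv i j 1) (tv i j 2) (tv i j 3) m

theorem tv_X (i j k : Fin 4) : substM (Matrix.transvection i j 1) (X k) = ev (tv i j k) := by
  simp only [substM, aeval_X, Matrix.transvection, Matrix.add_apply, add_smul,
    Finset.sum_add_distrib, Matrix.one_apply, ite_smul, one_smul, zero_smul, Matrix.single_apply, tv]
  by_cases h : k = i
  · subst h; simp [ev, un_mon]
  · simp [ev, un_mon, h, Ne.symm h]

theorem tv_mon (i j : Fin 4) (m : Mo) (h : m.deg < 16) :
    substM (Matrix.transvection i j 1) m.mon = ev (tvS i j m) :=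
  ev_subst _ _ _ _ _ (tv_X i j 0) (tv_X i j 1) (tv_X i j 2) (tv_X i j 3) m h

def qL : List Mo :=
  [⟨1, 1, 1, 6⟩, ⟨1, 1, 6, 1⟩, ⟨1, 6, 1, 1⟩, ⟨3, 1, 1, 4⟩, ⟨3, 1, 4, 1⟩, ⟨3, 4, 1, 1⟩]

theorem q7_eq : q7 = ev qL := by
  simp [q7, qL, ev, Mo.mon]; ring

theorem ev_homog (l : List Mo) (h : ∀ m ∈ l, m.deg = 9) : ev l ∈ homog 9 := by
  induction l with
  | nil => exact Submodule.zero_mem _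
  | cons m l ih =>
    refine Submodule.add_mem _ ?_ (ih fun m hm => h m (by simp [hm]))
    have := mon_homog m
    rwa [h m (by simp)] at this

theorem q7_homog : q7 ∈ homog 9 := by
  rw [q7_eq]
  exact ev_homog _ (by simp [qL, Mo.deg])

def qv : ℕ := 0x41802031800

theorem nfv_qL : nfv qL = qv := by decide +kernel

theorem Ps_q7 (j : ℕ) : Ps j q7 = bt qv j := by rw [q7_eq, Ps_ev, nfv_qL]

theorem check3 : ∀ i j : Fin 4, i ≠ j → nfv (qL.flatMap (tvS i j)) = qv := by decide +kernel

theorem ev_flatMap (F : P4 →ₐ[kk] P4) (G : Mo → List Mo) (l : List Mo)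
    (h : ∀ m ∈ l, F m.mon = ev (G m)) : F (ev l) = ev (l.flatMap G) := by
  induction l with
  | nil => simp [ev]
  | cons m l ih =>
    rw [List.flatMap_cons, ev_append, ev, map_add, h m (by simp), ih fun m hm => h m (by simp [hm])]

theorem P4_neg (f : P4) : -f = f := CharTwo.neg_eq f

theorem q7_trans (i j : Fin 4) (hij : i ≠ j) :
    substM (Matrix.transvection i j 1) q7 - q7 ∈ hitSub 9 := by
  refine hit_of_Ps _ (Submodule.sub_mem _ (substM_homog _ _ _ q7_homog) q7_homog) fun k _ => ?_
  rw [map_sub, Ps_q7, q7_eq, ev_flatMap _ (tvS i j), Ps_ev, check3 i j hij, sub_self]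
  intro m hm
  refine tv_mon i j m ?_
  revert m
  simp [qL, Mo.deg]

theorem q7_inv (M : Matrix (Fin 4) (Fin 4) kk) (hM : IsUnit M) :
    substM M q7 - q7 ∈ hitSub 9 := by
  have hk : ∀ x : kk, x ≠ 0 → x = 1 := by decide
  refine Matrix.diagonal_transvection_induction_of_det_ne_zero
    (fun M => substM M q7 - q7 ∈ hitSub 9) M ?_ ?_ ?_ ?_
  · exact ((Matrix.isUnit_iff_isUnit_det M).1 hM).ne_zero
  · intro D hD
    have : Matrix.diagonal D = 1 := by
      rw [← Matrix.diagonal_one]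
      congr 1
      funext i
      rw [Matrix.det_diagonal] at hD
      exact hk _ (Finset.prod_ne_zero_iff.1 hD i (Finset.mem_univ i))
    rw [this, substM_one, sub_self]
    exact Submodule.zero_mem _
  · rintro ⟨i, j, hij, c⟩
    rw [Matrix.TransvectionStruct.toMatrix_mk]
    by_cases hc : c = 0
    · rw [hc, Matrix.transvection_zero, substM_one, sub_self]
      exact Submodule.zero_mem _
    · rw [hk c hc]
      exact q7_trans i j hij
  · intro A B _ _ hA hB
    rw [substM_mul]
    have h1 := Submodule.add_mem _ (substM_hit B 9 _ hA) hB
    rwa [map_sub, sub_add_sub_cancel] at h1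

/-! ### uniqueness -/

def gensT : List (Fin 4 × Fin 4) := [(0, 1), (1, 2), (2, 3), (3, 0)]

/-- Images of the admissible monomials. -/
def imgs (p : Fin 4 × Fin 4) : List ℕ := bas.map fun m => nfv (tvS p.1 p.2 m)

/-- Row `i` of the transposed matrix, starting from column `k`. -/
def row (i : ℕ) : ℕ → List ℕ → ℕ
  | _, [] => 0
  | k, v :: l => bif v.testBit i then Nat.xor (2 ^ k) (row i (k + 1) l) else row i (k + 1) l

def rows : List ℕ :=
  gensT.flatMap fun p => forceL (imgs p) fun I =>
    (List.range 46).map fun i => Nat.xor (2 ^ i) (row i 0 I)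

def check4 : Bool :=
  forceL (build [] rows) fun B => (List.range 46).all fun i =>
    Nat.beq (redL B (Nat.xor (2 ^ i) (bif qv.testBit i then 2 ^ 11 else 0))) 0

theorem check4_true : check4 = true := by decide +kernel

def Lc (c : ℕ → kk) (r : ℕ) : kk := ∑ j ∈ Finset.range 46, bt r j * c j

theorem Lc_xor (c : ℕ → kk) (m n : ℕ) : Lc c (Nat.xor m n) = Lc c m + Lc c n := by
  simp only [Lc, bt_xor, add_mul, Finset.sum_add_distrib]

theorem Lc_zero (c : ℕ → kk) : Lc c 0 = 0 := by simp [Lc, bt_zero]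

theorem Lc_pow (c : ℕ → kk) (i : ℕ) (hi : i < 46) : Lc c (2 ^ i) = c i := by
  simp only [Lc, bt_pow, ite_mul, one_mul, zero_mul]
  rw [Finset.sum_ite_eq, if_pos (by simpa using hi)]

theorem Lc_row (c : ℕ → kk) (i k : ℕ) (l : List ℕ) (h : k + l.length ≤ 46) :
    Lc c (row i k l) = ∑ j ∈ Finset.range l.length, bt (l.getD j 0) i * c (k + j) := by
  induction l generalizing k with
  | nil => simp [row, Lc_zero]
  | cons v l ih =>
    simp only [List.length_cons] at h
    rw [List.length_cons, Finset.sum_range_succ', row]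
    have ih := ih (k + 1) (by omega)
    have e : ∑ j ∈ Finset.range l.length, bt ((v :: l).getD (j + 1) 0) i * c (k + (j + 1)) =
        ∑ j ∈ Finset.range l.length, bt (l.getD j 0) i * c (k + 1 + j) := by
      refine Finset.sum_congr rfl fun j _ => ?_
      rw [List.getD_cons_succ, Nat.add_right_comm k 1 j, Nat.add_assoc k j 1]
    rw [e, ← ih, List.getD_cons_zero, Nat.add_zero]
    cases hv : v.testBit i
    · simp [bt, hv]
    · rw [cond_true, Lc_xor, Lc_pow c k (by omega)]
      simp [bt, hv, add_comm]

theorem bas_length : bas.length = 46 := by decide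

theorem imgs_length (p : Fin 4 × Fin 4) : (imgs p).length = 46 := by
  rw [imgs, List.length_map, bas_length]

theorem imgs_getD (p : Fin 4 × Fin 4) (j : ℕ) (hj : j < 46) :
    (imgs p).getD j 0 = nfv (tvS p.1 p.2 (bs j)) := by
  have hb : j < bas.length := hj.trans_eq bas_length.symm
  rw [imgs, bs, List.getD_eq_getElem _ _ (by simpa using hb), List.getD_eq_getElem _ _ hb,
    List.getElem_map]

theorem gensT_ne : ∀ p ∈ gensT, p.1 ≠ p.2 := by decide

theorem inv_eq (f : P4) (hf : f ∈ homog 9)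
    (hinv : ∀ M : Matrix (Fin 4) (Fin 4) kk, IsUnit M → substM M f - f ∈ hitSub 9) :
    ∀ i < 46, Ps i f = bt qv i * Ps 11 f := by
  obtain ⟨c, hc⟩ : ∃ c : ℕ → kk, ∀ j, c j = Ps j f := ⟨fun j => Ps j f, fun _ => rfl⟩
  simp only [← hc]
  have hrows : ∀ r ∈ rows, Lc c r = 0 := by
    intro r hr
    simp only [rows, forceL_eq, List.mem_flatMap, List.mem_map, List.mem_range] at hr
    obtain ⟨p, hp, i, hi, rfl⟩ := hr
    have hu : IsUnit (Matrix.transvection p.1 p.2 (1 : kk)) := by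
      rw [Matrix.isUnit_iff_isUnit_det, Matrix.det_transvection_of_ne _ _ (gensT_ne p hp)]
      exact isUnit_one
    have h1 := Ps_hit i _ (hinv _ hu)
    have h2 := Ps_hit i _ (substM_hit (Matrix.transvection p.1 p.2 (1 : kk)) 9 _ (nf_mem f hf))
    rw [map_sub, sub_eq_zero] at h1
    rw [map_add, map_add, h1, map_sum, map_sum] at h2
    simp only [map_smul, ← hc] at h2
    rw [Lc_xor, Lc_pow c i hi, Lc_row c i 0 _ (by rw [imgs_length])]
    rw [imgs_length]
    refine Eq.trans ?_ h2
    refine congrArg (c i + ·) ?_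
    refine Finset.sum_congr rfl fun j hj => ?_
    have hj' := Finset.mem_range.1 hj
    rw [imgs_getD p j hj', tv_mon _ _ _ (by rw [bs_deg]; omega), Ps_ev,
      zero_add, smul_eq_mul, mul_comm]
  have xc : XorClosed fun r => Lc c r = 0 :=
    ⟨Lc_zero c, fun m n hm hn => by rw [Lc_xor, hm, hn, add_zero]⟩
  intro i hi
  have h4 := check4_true
  simp only [check4, forceL_eq, List.all_eq_true, List.mem_range] at h4
  have h5 := of_build xc _ hrows _ (Nat.eq_of_beq_eq_true (h4 i hi))
  simp only [Lc_xor, Lc_pow c i hi] at h5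
  have h6 : c i = Lc c (bif qv.testBit i then 2 ^ 11 else 0) := by
    rwa [← CharTwo.sub_eq_add, sub_eq_zero] at h5
  rw [h6]
  cases hq : qv.testBit i
  · simp [bt, hq, Lc_zero]
  · rw [cond_true, Lc_pow c 11 (by omega)]
    simp [bt, hq]

theorem Qmk_eq_zero (f : P4) (hf : f ∈ homog 9) : Qmk 9 f = 0 ↔ f ∈ hitSub 9 := by
  have h : ((toHomog 9 f : homog 9) : P4) = f := by
    have hf' : f ∈ homogeneousSubmodule (Fin 4) kk 9 := hf
    change homogeneousComponent 9 f = f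
    rw [homogeneousComponent_of_mem hf', if_pos rfl]
  rw [Qmk, LinearMap.comp_apply, Submodule.mkQ_apply, Submodule.Quotient.mk_eq_zero,
    Submodule.mem_comap, Submodule.subtype_apply, h]

theorem mem_invPre (f : P4) : f ∈ invPre 9 glSet ↔
    f ∈ homog 9 ∧ ∀ M : Matrix (Fin 4) (Fin 4) kk, IsUnit M → substM M f - f ∈ hitSub 9 := by
  simp [invPre, glSet, Submodule.mem_iInf]

/-- The subspace of `GL_4(F_2)`-invariants of `Q_9` is one-dimensional, spanned by the
class of `q7`. -/
theorem statement_7 :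
    QInv 9 glSet = Submodule.span kk {Qmk 9 q7} ∧ Qmk 9 q7 ≠ 0 := by
  constructor
  · apply le_antisymm
    · rintro _ ⟨f, hf, rfl⟩
      obtain ⟨hf, hinv⟩ := (mem_invPre f).1 hf
      have hc := inv_eq f hf hinv
      have h1 : f - Ps 11 f • q7 ∈ homog 9 :=
        Submodule.sub_mem _ hf (Submodule.smul_mem _ _ q7_homog)
      have h2 : f - Ps 11 f • q7 ∈ hitSub 9 := by
        refine hit_of_Ps _ h1 fun j hj => ?_
        rw [map_sub, map_smul, Ps_q7, hc j hj, smul_eq_mul, mul_comm, sub_self]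
      have h3 := (Qmk_eq_zero _ h1).2 h2
      rw [map_sub, map_smul, sub_eq_zero] at h3
      rw [h3]
      exact Submodule.smul_mem _ _ (Submodule.mem_span_singleton_self _)
    · rw [Submodule.span_singleton_le_iff_mem]
      exact ⟨q7, (mem_invPre q7).2 ⟨q7_homog, q7_inv⟩, rfl⟩
  · intro h
    have h1 := Ps_hit 11 _ ((Qmk_eq_zero _ q7_homog).1 h)
    rw [Ps_q7] at h1
    revert h1
    decide

end
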